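/- Adjoint symmetry of H₆: for all e ∈ ℂ⁹ and u ∈ ℂ, the formal adjoint of H₆(e,u) equals H₆(2−e₁, 2−e₂, 2−e₃, 2−e₄, 2−e₅, 2−e₆, 1−e₇, 1−e₈, 1−e₉, u′), where u′ := 6s² + (4s₁₂ − 18)s − 6s₁₂ − 2s₂₁ + 2s₂₂ − 4s₂₃ + 8 − u (with s, s₁₂, s₂₁, s₂₂, s₂₃ computed from e). -/

import Mathlib

open Polynomial

noncomputable section

abbrev EndP := Module.End ℂ (Polynomial ℂ)

/-- The formal derivative `∂` as a linear endomorphism of `ℂ[x]`. -/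
def D : EndP := Polynomial.derivative

/-- Multiplication by the polynomial `p` as a linear endomorphism of `ℂ[x]`. -/
def M (p : Polynomial ℂ) : EndP := LinearMap.mulLeft ℂ p

/-- The Euler operator `θ = x·∂`. -/
def θop : EndP := M X * D

/-- `s = (6 − e₁ − ⋯ − e₉)/3`. -/
def sC (e1 e2 e3 e4 e5 e6 e7 e8 e9 : ℂ) : ℂ :=
  (6 - e1 - e2 - e3 - e4 - e5 - e6 - e7 - e8 - e9) / 3

def T12C (e1 e2 e3 _e4 _e5 _e6 e7 e8 e9 : ℂ) : ℂ :=
  (e1 + e2 + e3) - 2 * (e7 + e8 + e9) - 9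

def T11C (e1 e2 e3 e4 e5 e6 e7 e8 e9 : ℂ) : ℂ :=
  let s11 := e1 + e2 + e3;
  let s12 := e4 + e5 + e6;
  let s13 := e7 + e8 + e9;
  let s21 := e1*e2 + e1*e3 + e2*e3;
  let s22 := e4*e5 + e4*e6 + e5*e6;
  let s23 := e7*e8 + e7*e9 + e8*e9;
  -8 + (s11^2 + 2*s11*s13 - s12^2 + s13^2)/3 + s11 - 5*s13 - s21 + s22 - 2*s23

def T22C (e1 e2 e3 _e4 _e5 _e6 e7 e8 e9 : ℂ) : ℂ :=
  -2 * (e1 + e2 + e3) + (e7 + e8 + e9) + 18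

def T21C (e1 e2 e3 e4 e5 e6 e7 e8 e9 : ℂ) : ℂ :=
  let s11 := e1 + e2 + e3;
  let s12 := e4 + e5 + e6;
  let s13 := e7 + e8 + e9;
  let s21 := e1*e2 + e1*e3 + e2*e3;
  let s22 := e4*e5 + e4*e6 + e5*e6;
  let s23 := e7*e8 + e7*e9 + e8*e9;
  35 + (-s11^2 - 2*s11*s13 + s12^2 - s13^2)/3 - 7*s11 + 5*s13 + 2*s21 - s22 + s23

def T20C (e1 e2 e3 e4 e5 e6 e7 e8 e9 u : ℂ) : ℂ :=
  let s11 := e1 + e2 + e3;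
  let s12 := e4 + e5 + e6;
  let s13 := e7 + e8 + e9;
  let s21 := e1*e2 + e1*e3 + e2*e3;
  let s22 := e4*e5 + e4*e6 + e5*e6;
  let s31 := e1*e2*e3;
  let s32 := e4*e5*e6;
  let s33 := e7*e8*e9;
  -u + 19 + (s11^2*s13 - s11*s12^2 + s11*s13^2 - s12^2*s13)/9
    + (s13^3 + s11^3 - 2*s12^3)/27
    + (-2*s11^2 - 4*s11*s13 + s11*s22 + 2*s12^2 + s22*s12 - 2*s13^2 + s22*s13)/3
    - 5*s11 + 4*s13 + 3*s21 - 2*s22 - s31 - s32 - s33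

/-- `B₀(t) = (t+e₇)(t+e₈)(t+e₉)`. -/
def B0op (e7 e8 e9 : ℂ) (t : EndP) : EndP :=
  (t + e7 • 1) * (t + e8 • 1) * (t + e9 • 1)

/-- `B₁(t) = −3t³ + T₁₂t² + T₁₁t + u`. -/
def B1op (e1 e2 e3 e4 e5 e6 e7 e8 e9 u : ℂ) (t : EndP) : EndP :=
  (-3 : ℂ) • t ^ 3 + (T12C e1 e2 e3 e4 e5 e6 e7 e8 e9) • t ^ 2
    + (T11C e1 e2 e3 e4 e5 e6 e7 e8 e9) • t + u • 1

/-- `B₂(t) = 3t³ + T₂₂t² + T₂₁t + T₂₀`. -/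
def B2op (e1 e2 e3 e4 e5 e6 e7 e8 e9 u : ℂ) (t : EndP) : EndP :=
  (3 : ℂ) • t ^ 3 + (T22C e1 e2 e3 e4 e5 e6 e7 e8 e9) • t ^ 2
    + (T21C e1 e2 e3 e4 e5 e6 e7 e8 e9) • t + (T20C e1 e2 e3 e4 e5 e6 e7 e8 e9 u) • 1

/-- `T₃(t) = −(t+3−e₁)(t+3−e₂)(t+3−e₃)`. -/
def T3op (e1 e2 e3 : ℂ) (t : EndP) : EndP :=
  -((t + (3 - e1) • 1) * (t + (3 - e2) • 1) * (t + (3 - e3) • 1))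

/-- The operator `H₆(e,u)`. -/
def H6op (e1 e2 e3 e4 e5 e6 e7 e8 e9 u : ℂ) : EndP :=
  let s := sC e1 e2 e3 e4 e5 e6 e7 e8 e9;
  (θop + (s + 2) • 1) * (θop + (s + 1) • 1) * (θop + s • 1) * B0op e7 e8 e9 θop
    + (θop + (s + 2) • 1) * (θop + (s + 1) • 1) * B1op e1 e2 e3 e4 e5 e6 e7 e8 e9 u θop * D
    + (θop + (s + 2) • 1) * B2op e1 e2 e3 e4 e5 e6 e7 e8 e9 u θop * D ^ 2
    + T3op e1 e2 e3 θop * D ^ 3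

/-!
The formal adjoint reverses products, fixes `x` and sends `∂` to `-∂`, hence sends `θ = x ∂` to
`-∂ x = -θ - 1`. Since `∂ᵏ θ = (θ + k) ∂ᵏ`, the adjoint of `q(θ) ∂ᵏ` is
`(-1)ᵏ q(-θ - k - 1) ∂ᵏ`. Writing `H₆ = ∑ₖ qₖ(θ) ∂ᵏ`, the symmetry is thus the polynomial identity
`qₖ'(t) = (-1)ᵏ qₖ(-t - k - 1)` for `k = 0, …, 3`, where `qₖ'` belongs to the reflected
parameters; under the reflection `s` becomes `-1 - s`.
The adjoint does not depend on how an operator is written as `∑ⱼ pⱼ(x) ∂ʲ`, because the `pⱼ` can be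
recovered one after the other from the values of the operator on `1, x, x², …`.
-/

theorem semiconjBy_aeval {R S : Type*} [CommSemiring R] [Semiring S] [Algebra R S] {a x y : S}
    (h : SemiconjBy a x y) (p : R[X]) : SemiconjBy a (aeval x p) (aeval y p) := by
  induction p using Polynomial.induction_on' with
  | add p q hp hq => simpa only [map_add] using hp.add_right hq
  | monomial n c =>
    simpa only [aeval_monomial] using
      SemiconjBy.mul_right (Algebra.commutes c a).symm (h.pow_right n)

/-- Elements `x` and `∂ = d` of the ring `S` satisfying the relation of the first Weyl algebra. The
polynomial `p(x)` is then the element `aeval x p`. -/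
structure WeylPair (S : Type*) [Ring S] where
  x : S
  d : S
  d_mul_x : d * x = x * d + 1

namespace WeylPair

section Calculus

variable {R S : Type*} [CommRing R] [Ring S] [Algebra R S] (W : WeylPair S)

theorem d_mul_aeval_x (p : R[X]) :
    W.d * aeval W.x p = aeval W.x (derivative p) + aeval W.x p * W.d := by
  induction p using Polynomial.induction_on with
  | C a =>
    rw [derivative_C, map_zero, zero_add, aeval_C, Algebra.commutes]
  | add p q hp hq =>
    rw [map_add, mul_add, hp, hq, map_add, map_add, add_mul]
    abel
  | monomial n a ih =>
    rw [pow_succ, ← mul_assoc]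
    generalize C a * X ^ n = q at ih ⊢
    rw [derivative_mul, derivative_X, mul_one, map_add, map_mul, map_mul, aeval_X, ← mul_assoc,
      ih, add_mul, mul_assoc _ W.d, W.d_mul_x, mul_add, mul_one, ← mul_assoc]
    abel

/-- The differential operator `∑ⱼ cⱼ ∂ʲ` with symbol `∑ⱼ cⱼ ξʲ`, where `ξ` is the outer variable
of `R[X][X]`. -/
def diffOp : R[X][X] →ₗ[R] S :=
  lsum fun j => LinearMap.mulRight R (W.d ^ j) ∘ₗ (aeval W.x).toLinearMap

/-- The formal adjoint `∑ⱼ (-∂)ʲ cⱼ` of the differential operator with symbol `∑ⱼ cⱼ ξʲ`. -/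
def adjointDiffOp : R[X][X] →ₗ[R] S :=
  lsum fun j => LinearMap.mulLeft R ((-W.d) ^ j) ∘ₗ (aeval W.x).toLinearMap

theorem diffOp_monomial (j : ℕ) (c : R[X]) :
    W.diffOp (monomial j c) = aeval W.x c * W.d ^ j :=
  sum_monomial_index c _ (map_zero _)

theorem adjointDiffOp_monomial (j : ℕ) (c : R[X]) :
    W.adjointDiffOp (monomial j c) = (-W.d) ^ j * aeval W.x c :=
  sum_monomial_index c _ (map_zero _)

theorem diffOp_eq_sum_range (P : R[X][X]) :
    W.diffOp P = ∑ j ∈ Finset.range (P.natDegree + 1), aeval W.x (P.coeff j) * W.d ^ j :=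
  sum_over_range _ fun _ => map_zero _

variable (R) in
/-- `B` is the formal adjoint of the differential operator `A`, computed from some symbol of `A`;
it is determined by `A` whenever `W.diffOp` is injective. -/
def IsFormalAdjoint (A B : S) : Prop :=
  ∃ P : R[X][X], W.diffOp P = A ∧ W.adjointDiffOp P = B

theorem isFormalAdjoint_d_pow (k : ℕ) : W.IsFormalAdjoint R (W.d ^ k) ((-W.d) ^ k) :=
  ⟨monomial k 1, by rw [diffOp_monomial, map_one, one_mul],
    by rw [adjointDiffOp_monomial, map_one, mul_one]⟩

theorem isFormalAdjoint_aeval_x (q : R[X]) :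
    W.IsFormalAdjoint R (aeval W.x q) (aeval W.x q) :=
  ⟨monomial 0 q, by rw [diffOp_monomial, pow_zero, mul_one],
    by rw [adjointDiffOp_monomial, pow_zero, one_mul]⟩

namespace IsFormalAdjoint

variable {W} {A B A' B' : S}

theorem add (h : W.IsFormalAdjoint R A B) (h' : W.IsFormalAdjoint R A' B') :
    W.IsFormalAdjoint R (A + A') (B + B') := by
  obtain ⟨P, rfl, rfl⟩ := h
  obtain ⟨Q, rfl, rfl⟩ := h'
  exact ⟨P + Q, map_add _ _ _, map_add _ _ _⟩

theorem sum {ι : Type*} (s : Finset ι) {A B : ι → S}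
    (h : ∀ i ∈ s, W.IsFormalAdjoint R (A i) (B i)) :
    W.IsFormalAdjoint R (∑ i ∈ s, A i) (∑ i ∈ s, B i) := by
  choose! P hA hB using h
  exact ⟨∑ i ∈ s, P i, by rw [map_sum, Finset.sum_congr rfl hA],
    by rw [map_sum, Finset.sum_congr rfl hB]⟩

theorem aeval_x_mul (q : R[X]) (h : W.IsFormalAdjoint R A B) :
    W.IsFormalAdjoint R (aeval W.x q * A) (B * aeval W.x q) := by
  obtain ⟨P, rfl, rfl⟩ := h
  induction P using Polynomial.induction_on' with
  | add P Q hP hQ => rw [map_add, map_add, mul_add, add_mul]; exact hP.add hQ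
  | monomial n a =>
    refine ⟨monomial n (q * a), ?_, ?_⟩
    · rw [diffOp_monomial, diffOp_monomial, map_mul, mul_assoc]
    · rw [adjointDiffOp_monomial, adjointDiffOp_monomial, mul_comm q, map_mul, mul_assoc]

theorem d_mul (h : W.IsFormalAdjoint R A B) : W.IsFormalAdjoint R (W.d * A) (B * -W.d) := by
  obtain ⟨P, rfl, rfl⟩ := h
  induction P using Polynomial.induction_on' with
  | add P Q hP hQ => rw [map_add, map_add, mul_add, add_mul]; exact hP.add hQ
  | monomial n a =>
    refine ⟨monomial n (derivative a) + monomial (n + 1) a, ?_, ?_⟩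
    · rw [map_add, diffOp_monomial, diffOp_monomial, diffOp_monomial, ← mul_assoc,
        d_mul_aeval_x, add_mul, pow_succ', mul_assoc]
    · rw [map_add, adjointDiffOp_monomial, adjointDiffOp_monomial, adjointDiffOp_monomial,
        pow_succ, mul_assoc, mul_assoc, neg_mul, d_mul_aeval_x, ← mul_add, mul_neg, neg_add,
        add_neg_cancel_left]

theorem d_pow_mul (k : ℕ) (h : W.IsFormalAdjoint R A B) :
    W.IsFormalAdjoint R (W.d ^ k * A) (B * (-W.d) ^ k) := by
  induction k with
  | zero => simpa only [pow_zero, one_mul, mul_one] using h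
  | succ k ih =>
    rw [pow_succ' W.d, pow_succ (-W.d), mul_assoc W.d, ← mul_assoc B]
    exact ih.d_mul

theorem mul (h : W.IsFormalAdjoint R A B) (h' : W.IsFormalAdjoint R A' B') :
    W.IsFormalAdjoint R (A * A') (B' * B) := by
  obtain ⟨P, rfl, rfl⟩ := h
  induction P using Polynomial.induction_on' with
  | add P Q hP hQ => rw [map_add, map_add, add_mul, mul_add]; exact hP.add hQ
  | monomial n a =>
    rw [diffOp_monomial, adjointDiffOp_monomial, mul_assoc, ← mul_assoc B']
    exact (h'.d_pow_mul n).aeval_x_mul a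

theorem aeval (h : W.IsFormalAdjoint R A B) (p : R[X]) :
    W.IsFormalAdjoint R (aeval A p) (aeval B p) := by
  induction p using Polynomial.induction_on with
  | C a => simpa only [aeval_C] using W.isFormalAdjoint_aeval_x (C a)
  | add p q hp hq => simpa only [map_add] using hp.add hq
  | monomial n a ih =>
    have hB : Polynomial.aeval B (C a * X ^ (n + 1)) = B * Polynomial.aeval B (C a * X ^ n) := by
      rw [pow_succ, ← mul_assoc, mul_comm, map_mul, aeval_X]
    rw [hB, pow_succ, ← mul_assoc, map_mul, aeval_X]
    exact ih.mul h

theorem exists_eq_sum_range (h : W.IsFormalAdjoint R A B) :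
    ∃ (n : ℕ) (p : ℕ → R[X]),
      A = ∑ j ∈ Finset.range n, Polynomial.aeval W.x (p j) * W.d ^ j := by
  obtain ⟨P, rfl, -⟩ := h
  exact ⟨_, _, W.diffOp_eq_sum_range P⟩

theorem sum_range_eq (h : W.IsFormalAdjoint R A B)
    (hW : Function.Injective (W.diffOp : R[X][X] →ₗ[R] S)) {n : ℕ} {p : ℕ → R[X]}
    (hA : A = ∑ j ∈ Finset.range n, Polynomial.aeval W.x (p j) * W.d ^ j) :
    ∑ j ∈ Finset.range n, (-1 : R) ^ j • (W.d ^ j * Polynomial.aeval W.x (p j)) = B := by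
  obtain ⟨P, rfl, rfl⟩ := h
  have hP : P = ∑ j ∈ Finset.range n, monomial j (p j) :=
    hW (by simp only [hA, map_sum, diffOp_monomial])
  have neg_d_pow (j : ℕ) : (-W.d) ^ j = (-1 : R) ^ j • W.d ^ j := by
    rw [neg_pow, Algebra.smul_def, map_pow, map_neg, map_one]
  simp only [hP, map_sum, adjointDiffOp_monomial, neg_d_pow, smul_mul_assoc]

end IsFormalAdjoint

/-- The Euler operator `θ = x ∂`. -/
def euler : S := W.x * W.d

theorem isFormalAdjoint_euler : W.IsFormalAdjoint R W.euler (-W.euler - 1) := by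
  have h := (W.isFormalAdjoint_aeval_x (X : R[X])).mul (W.isFormalAdjoint_d_pow 1)
  rwa [aeval_X, pow_one, pow_one, neg_mul, d_mul_x, neg_add'] at h

theorem semiconjBy_d_pow_euler (k : ℕ) : SemiconjBy (W.d ^ k) W.euler (W.euler + k) := by
  induction k with
  | zero => simp
  | succ k ih =>
    have hd : SemiconjBy W.d W.euler (W.euler + 1) := by
      rw [SemiconjBy, euler, ← d_mul_x, mul_assoc]
    rw [pow_succ', Nat.cast_succ, add_comm (k : S), ← add_assoc]
    exact (hd.add_right (Nat.commute_cast W.d k).semiconjBy).mul_left ih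

theorem isFormalAdjoint_aeval_euler_mul_d_pow (p : R[X]) (k : ℕ) :
    W.IsFormalAdjoint R (aeval W.euler p * W.d ^ k)
      (aeval W.euler ((-1) ^ k * p.comp (-X - (k : R[X]) - 1)) * W.d ^ k) := by
  have shift : SemiconjBy (W.d ^ k) (-W.euler - 1) (-(W.euler + k) - 1) :=
    (W.semiconjBy_d_pow_euler k).neg_right.sub_right (SemiconjBy.one_right _)
  have reflect : aeval W.euler ((-1) ^ k * p.comp (-X - (k : R[X]) - 1))
      = (-1) ^ k * aeval (-(W.euler + k) - 1) p := by
    simp only [map_mul, map_pow, map_neg, map_one, aeval_comp, map_sub, aeval_X, map_natCast,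
      neg_add']
  rw [reflect, mul_assoc, ← (semiconjBy_aeval shift p).eq, ← mul_assoc, ← neg_pow]
  exact (W.isFormalAdjoint_euler.aeval p).mul (W.isFormalAdjoint_d_pow k)

end Calculus

section Polynomial

variable (R : Type*) [CommRing R]

theorem derivative_mul_mulLeft_X :
    (derivative : Module.End R R[X]) * LinearMap.mulLeft R X
      = LinearMap.mulLeft R X * derivative + 1 := by
  refine LinearMap.ext fun f => ?_
  simp only [Module.End.mul_apply, LinearMap.mulLeft_apply, LinearMap.add_apply,
    Module.End.one_apply, derivative_mul, derivative_X, one_mul, add_comm]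

/-- The action of the Weyl algebra on `R[X]`: multiplication by `X` and formal differentiation. -/
def polynomial : WeylPair (Module.End R R[X]) where
  x := LinearMap.mulLeft R X
  d := derivative
  d_mul_x := derivative_mul_mulLeft_X R

variable {R}

theorem aeval_polynomial_x (p : R[X]) : aeval (polynomial R).x p = LinearMap.mulLeft R p := by
  change aeval (Algebra.lmul R R[X] X) p = Algebra.lmul R R[X] p
  rw [aeval_algHom_apply, aeval_X_left_apply]

theorem polynomial_diffOp_X_pow_of_coeff_eq_zero {P : R[X][X]} {k : ℕ}
    (hP : ∀ j < k, P.coeff j = 0) :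
    (polynomial R).diffOp P (X ^ k) = k.factorial • P.coeff k := by
  have term_apply (j : ℕ) :
      (aeval (polynomial R).x (P.coeff j) * (polynomial R).d ^ j) (X ^ k)
        = k.descFactorial j • (P.coeff j * X ^ (k - j)) := by
    rw [Module.End.mul_apply, Module.End.pow_apply, aeval_polynomial_x, LinearMap.mulLeft_apply,
      ← mul_smul_comm, ← Nat.cast_smul_eq_nsmul R]
    exact congrArg _ (iterate_derivative_X_pow_eq_smul k j)
  rw [diffOp_eq_sum_range, LinearMap.sum_apply, Finset.sum_eq_single k]
  · rw [term_apply, Nat.descFactorial_self, Nat.sub_self, pow_zero, mul_one]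
  · intro j _ hjk
    rw [term_apply]
    rcases hjk.lt_or_gt with hlt | hgt
    · rw [hP j hlt, zero_mul, smul_zero]
    · rw [Nat.descFactorial_of_lt hgt, zero_smul]
  · intro hk
    have hdeg : P.natDegree < k := by simpa using hk
    rw [term_apply, coeff_eq_zero_of_natDegree_lt hdeg, zero_mul, smul_zero]

theorem polynomial_diffOp_injective [IsAddTorsionFree R] :
    Function.Injective ((polynomial R).diffOp : R[X][X] →ₗ[R] Module.End R R[X]) := by
  refine (injective_iff_map_eq_zero _).2 fun P hP => ?_
  ext1 k
  induction k using Nat.strong_induction_on with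
  | _ k ih =>
    have hk : k.factorial • P.coeff k = 0 := by
      rw [← polynomial_diffOp_X_pow_of_coeff_eq_zero ih, hP, LinearMap.zero_apply]
    ext n
    have hkn : k.factorial • (P.coeff k).coeff n = 0 := by
      rw [← coeff_smul, hk, coeff_zero]
    exact (smul_eq_zero.1 hkn).resolve_left k.factorial_ne_zero

end Polynomial

end WeylPair

section H6

variable (e1 e2 e3 e4 e5 e6 e7 e8 e9 u : ℂ)

/-- The polynomial `B₁`, so that `B1op` is its evaluation at an operator. -/
def B1poly : ℂ[X] :=
  C (-3) * X ^ 3 + C (T12C e1 e2 e3 e4 e5 e6 e7 e8 e9) * X ^ 2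
    + C (T11C e1 e2 e3 e4 e5 e6 e7 e8 e9) * X + C u

/-- The polynomial `B₂`, so that `B2op` is its evaluation at an operator. -/
def B2poly : ℂ[X] :=
  C 3 * X ^ 3 + C (T22C e1 e2 e3 e4 e5 e6 e7 e8 e9) * X ^ 2
    + C (T21C e1 e2 e3 e4 e5 e6 e7 e8 e9) * X + C (T20C e1 e2 e3 e4 e5 e6 e7 e8 e9 u)

/-- The polynomials `q₀, …, q₃` with `H₆ = ∑ₖ qₖ(θ) ∂ᵏ`. -/
def H6coeff : Fin 4 → ℂ[X] :=
  let s := sC e1 e2 e3 e4 e5 e6 e7 e8 e9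
  ![(X + C (s + 2)) * (X + C (s + 1)) * (X + C s)
      * ((X + C e7) * (X + C e8) * (X + C e9)),
    (X + C (s + 2)) * (X + C (s + 1)) * B1poly e1 e2 e3 e4 e5 e6 e7 e8 e9 u,
    (X + C (s + 2)) * B2poly e1 e2 e3 e4 e5 e6 e7 e8 e9 u,
    -((X + C (3 - e1)) * (X + C (3 - e2)) * (X + C (3 - e3)))]

/-- The accessory parameter `u′` of the adjoint of `H₆(e,u)`; it is the constant coefficient
`-B₁(-2)` of `-B₁(-t - 2)`. -/
def adjointAccessory : ℂ :=
  let s := sC e1 e2 e3 e4 e5 e6 e7 e8 e9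
  6 * s ^ 2 + (4 * (e4 + e5 + e6) - 18) * s - 6 * (e4 + e5 + e6)
    - 2 * (e1 * e2 + e1 * e3 + e2 * e3) + 2 * (e4 * e5 + e4 * e6 + e5 * e6)
    - 4 * (e7 * e8 + e7 * e9 + e8 * e9) + 8 - u

theorem aeval_B1poly (t : EndP) :
    aeval t (B1poly e1 e2 e3 e4 e5 e6 e7 e8 e9 u) = B1op e1 e2 e3 e4 e5 e6 e7 e8 e9 u t := by
  simp only [B1poly, B1op, map_add, map_mul, map_pow, aeval_X, aeval_C,
    Algebra.algebraMap_eq_smul_one, smul_mul_assoc, one_mul]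

theorem aeval_B2poly (t : EndP) :
    aeval t (B2poly e1 e2 e3 e4 e5 e6 e7 e8 e9 u) = B2op e1 e2 e3 e4 e5 e6 e7 e8 e9 u t := by
  simp only [B2poly, B2op, map_add, map_mul, map_pow, aeval_X, aeval_C,
    Algebra.algebraMap_eq_smul_one, smul_mul_assoc, one_mul]

theorem H6op_eq_sum :
    H6op e1 e2 e3 e4 e5 e6 e7 e8 e9 u
      = ∑ k : Fin 4, aeval θop (H6coeff e1 e2 e3 e4 e5 e6 e7 e8 e9 u k) * D ^ (k : ℕ) := by
  have aeval_X_add_C (c : ℂ) : aeval θop (X + C c) = θop + c • 1 := by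
    rw [map_add, aeval_X, aeval_C, Algebra.algebraMap_eq_smul_one]
  have aeval_neg (p : ℂ[X]) : aeval θop (-p) = -aeval θop p := map_neg _ p
  rw [Fin.sum_univ_four]
  simp only [H6coeff, H6op, B0op, T3op, Matrix.cons_val, aeval_neg, map_mul, aeval_X_add_C,
    aeval_B1poly, aeval_B2poly, Fin.isValue, Fin.coe_ofNat_eq_mod, Nat.zero_mod, Nat.one_mod,
    Nat.reduceMod, pow_zero, pow_one, mul_one]

theorem sC_reflect :
    sC (2 - e1) (2 - e2) (2 - e3) (2 - e4) (2 - e5) (2 - e6) (1 - e7) (1 - e8) (1 - e9)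
      = -1 - sC e1 e2 e3 e4 e5 e6 e7 e8 e9 := by
  unfold sC
  ring

theorem B1poly_reflect :
    B1poly (2 - e1) (2 - e2) (2 - e3) (2 - e4) (2 - e5) (2 - e6) (1 - e7) (1 - e8) (1 - e9)
        (adjointAccessory e1 e2 e3 e4 e5 e6 e7 e8 e9 u)
      = -(B1poly e1 e2 e3 e4 e5 e6 e7 e8 e9 u).comp (-X - 1 - 1) := by
  refine Polynomial.funext fun t => ?_
  simp only [B1poly, eval_add, eval_mul, eval_pow, eval_C, eval_X, eval_neg, eval_comp, eval_sub,
    eval_one, T12C, T11C, adjointAccessory, sC]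
  ring

theorem B2poly_reflect :
    B2poly (2 - e1) (2 - e2) (2 - e3) (2 - e4) (2 - e5) (2 - e6) (1 - e7) (1 - e8) (1 - e9)
        (adjointAccessory e1 e2 e3 e4 e5 e6 e7 e8 e9 u)
      = -(B2poly e1 e2 e3 e4 e5 e6 e7 e8 e9 u).comp (-X - 2 - 1) := by
  refine Polynomial.funext fun t => ?_
  simp only [B2poly, eval_add, eval_mul, eval_pow, eval_C, eval_X, eval_neg, eval_comp, eval_sub,
    eval_one, eval_ofNat, T22C, T21C, T20C, adjointAccessory, sC]
  ring

theorem H6coeff_reflect (k : Fin 4) :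
    H6coeff (2 - e1) (2 - e2) (2 - e3) (2 - e4) (2 - e5) (2 - e6) (1 - e7) (1 - e8) (1 - e9)
        (adjointAccessory e1 e2 e3 e4 e5 e6 e7 e8 e9 u) k
      = (-1) ^ (k : ℕ)
        * (H6coeff e1 e2 e3 e4 e5 e6 e7 e8 e9 u k).comp (-X - ((k : ℕ) : ℂ[X]) - 1) := by
  refine Polynomial.funext fun t => ?_
  match k with
  | 0 | 1 | 2 | 3 =>
    simp only [H6coeff, sC_reflect, B1poly_reflect, B2poly_reflect, Matrix.cons_val,
      Fin.isValue, Fin.coe_ofNat_eq_mod, Nat.zero_mod, Nat.one_mod, Nat.reduceMod, eval_mul,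
      eval_add, eval_sub, eval_neg, eval_pow, eval_comp, eval_X, eval_C, eval_zero, eval_one,
      eval_ofNat, Nat.cast_ofNat, Nat.cast_zero, Nat.cast_one]
    ring

theorem H6op_isFormalAdjoint :
    (WeylPair.polynomial ℂ).IsFormalAdjoint ℂ (H6op e1 e2 e3 e4 e5 e6 e7 e8 e9 u)
      (H6op (2 - e1) (2 - e2) (2 - e3) (2 - e4) (2 - e5) (2 - e6) (1 - e7) (1 - e8) (1 - e9)
        (adjointAccessory e1 e2 e3 e4 e5 e6 e7 e8 e9 u)) := by
  rw [H6op_eq_sum, H6op_eq_sum]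
  refine .sum _ fun k _ => ?_
  rw [H6coeff_reflect]
  exact (WeylPair.polynomial ℂ).isFormalAdjoint_aeval_euler_mul_d_pow _ k

theorem M_eq_aeval (p : ℂ[X]) : M p = aeval (WeylPair.polynomial ℂ).x p :=
  (WeylPair.aeval_polynomial_x p).symm

end H6

/-- Adjoint symmetry of `H₆`: the operator `H₆(e,u)` has an expression `∑ⱼ pⱼ(x)·∂ʲ` with
polynomial coefficients, and for any such expression the formal adjoint
`∑ⱼ (−1)ʲ ∂ʲ ∘ (pⱼ(x)·)` equals `H₆(2−e₁,…,2−e₆,1−e₇,1−e₈,1−e₉, u′)` where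
`u′ = 6s² + (4s₁₂ − 18)s − 6s₁₂ − 2s₂₁ + 2s₂₂ − 4s₂₃ + 8 − u`. -/
theorem H6_adjoint_symmetry (e1 e2 e3 e4 e5 e6 e7 e8 e9 u s u' : ℂ)
    (hs : s = sC e1 e2 e3 e4 e5 e6 e7 e8 e9)
    (hu' : u' = 6*s^2 + (4*(e4 + e5 + e6) - 18)*s - 6*(e4 + e5 + e6)
        - 2*(e1*e2 + e1*e3 + e2*e3) + 2*(e4*e5 + e4*e6 + e5*e6)
        - 4*(e7*e8 + e7*e9 + e8*e9) + 8 - u) :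
    (∃ (n : ℕ) (p : ℕ → Polynomial ℂ),
      H6op e1 e2 e3 e4 e5 e6 e7 e8 e9 u = ∑ j ∈ Finset.range n, M (p j) * D ^ j) ∧
    ∀ (n : ℕ) (p : ℕ → Polynomial ℂ),
      H6op e1 e2 e3 e4 e5 e6 e7 e8 e9 u = ∑ j ∈ Finset.range n, M (p j) * D ^ j →
      ∑ j ∈ Finset.range n, ((-1 : ℂ) ^ j) • (D ^ j * M (p j))
        = H6op (2 - e1) (2 - e2) (2 - e3) (2 - e4) (2 - e5) (2 - e6)
            (1 - e7) (1 - e8) (1 - e9) u' := by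
  subst hs hu'
  have adjoint := H6op_isFormalAdjoint e1 e2 e3 e4 e5 e6 e7 e8 e9 u
  simp only [M_eq_aeval]
  exact ⟨adjoint.exists_eq_sum_range, fun n p hp =>
    adjoint.sum_range_eq WeylPair.polynomial_diffOp_injective hp⟩
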